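/- arXiv:2412.15771 — 2 statements merged into one kernel-verified Lean document; each statement's English description precedes it below -/
import Mathlib

section
/- Let ω be a smooth p-form on an open set U ⊆ ℝⁿ and x ∈ U. Then ω has constant coefficients on a neighbourhood of x if and only if there exist an open neighbourhood V of x and a torsion-free flat linear connection Γ on V such that ∇ω = 0 on V. -/
/-- Constant coefficients for a `p`-form (see context). -/
def HasConstantCoefficientsFormAt (n p : ℕ) (U : Set (Fin n → ℝ))
    (ω : (Fin n → ℝ) → ((Fin n → ℝ) [×p]→L[ℝ] ℝ)) (x : Fin n → ℝ) : Prop :=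
  ∃ V : Set (Fin n → ℝ), IsOpen V ∧ x ∈ V ∧ V ⊆ U ∧
    ∃ u : (Fin n → ℝ) → (Fin n → ℝ),
      ContDiffOn ℝ (⊤ : ℕ∞) u V ∧ Set.InjOn u V ∧ IsOpen (u '' V) ∧
      (∀ y ∈ V, Function.Bijective (fderiv ℝ u y)) ∧
      ∃ c : (Fin n → ℝ) [×p]→L[ℝ] ℝ,
        ∀ y ∈ V, ∀ v : Fin p → (Fin n → ℝ),
          ω y v = c (fun i => fderiv ℝ u y (v i))

section AuxFlat

open Set Metric

theorem aux_linear_ode {𝔸 : Type*} [NormedRing 𝔸] [NormedAlgebra ℝ 𝔸] [CompleteSpace 𝔸]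
    (g : ℝ → 𝔸) (hg : ContinuousOn g (Icc 0 1)) (q : ℝ) (hq : 0 ≤ q)
    (hgq : ∀ t ∈ Icc (0 : ℝ) 1, ‖g t‖ ≤ q) (hq1 : (‖(1 : 𝔸)‖ + 1) * q ≤ 1) :
    ∃ α : ℝ → 𝔸, α 0 = 1 ∧
      (∀ t ∈ Icc (0 : ℝ) 1, HasDerivWithinAt α (α t * g t) (Icc 0 1) t) ∧
      ∀ t ∈ Icc (0 : ℝ) 1, ‖α t‖ ≤ ‖(1 : 𝔸)‖ * Real.exp q := by
  have hpl : IsPicardLindelof (fun t (a : 𝔸) => a * g t)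
      (⟨0, by simp⟩ : Icc (0 : ℝ) 1) (1 : 𝔸) 1 0 1 ⟨q, hq⟩ := by
    refine ⟨?_, ?_, ?_, ?_⟩
    · intro t ht
      refine LipschitzOnWith.of_dist_le_mul ?_
      intro a _ b _
      simp only [dist_eq_norm, ← sub_mul]
      calc ‖(a - b) * g t‖ ≤ ‖a - b‖ * ‖g t‖ := norm_mul_le _ _
        _ ≤ ‖a - b‖ * q := by gcongr; exact hgq t ht
        _ = _ := by rw [mul_comm]; rfl
    · intro a _
      exact continuousOn_const.mul hg
    · intro t ht a ha
      have h1 : ‖a‖ ≤ ‖(1 : 𝔸)‖ + 1 := by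
        have : ‖a - 1‖ ≤ 1 := by simpa [dist_eq_norm] using ha
        have h2 := norm_add_le (a - 1) 1
        simp only [sub_add_cancel] at h2
        linarith
      calc ‖a * g t‖ ≤ ‖a‖ * ‖g t‖ := norm_mul_le _ _
        _ ≤ (‖(1 : 𝔸)‖ + 1) * q := by gcongr; exact hgq t ht
        _ ≤ 1 := hq1
    · simp
  obtain ⟨α, h0, h1⟩ := hpl.exists_eq_forall_mem_Icc_hasDerivWithinAt₀
  refine ⟨α, h0, h1, ?_⟩
  intro t ht
  have := norm_le_gronwallBound_of_norm_deriv_right_le (f := α) (f' := fun t => α t * g t)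
    (δ := ‖(1 : 𝔸)‖) (K := q) (ε := 0) (a := 0) (b := 1)
    (fun t ht => (h1 t ht).continuousWithinAt)
    (fun t ht => (h1 t (Ico_subset_Icc_self ht)).mono_of_mem_nhdsWithin
      (Icc_mem_nhdsGE_of_mem ht))
    (by simp only at h0; rw [h0])
    (fun t ht => by
      have := hgq t (Ico_subset_Icc_self ht)
      rw [add_zero, mul_comm]
      exact (norm_mul_le _ _).trans (by gcongr)) t ht
  rw [gronwallBound_ε0] at this
  refine this.trans ?_
  gcongr
  nlinarith [ht.1, ht.2]

theorem aux_total_ode {E 𝔸 : Type*} [NormedAddCommGroup E] [NormedSpace ℝ E]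
    [NormedRing 𝔸] [NormedAlgebra ℝ 𝔸] [CompleteSpace 𝔸]
    (G : E → E →L[ℝ] 𝔸) (G' : E → E →L[ℝ] E →L[ℝ] 𝔸) (x : E) (r M K₁ K : ℝ)
    (hr : 0 < r) (hr1 : r ≤ 1) (hM : 0 ≤ M) (hK₁ : 0 ≤ K₁) (hK : 0 ≤ K)
    (hG : ∀ y ∈ ball x r, HasFDerivAt G (G' y) y)
    (hGM : ∀ y ∈ ball x r, ‖G y‖ ≤ M)
    (hGK : ∀ y ∈ ball x r, ‖G' y‖ ≤ K₁)
    (hT : ∀ y ∈ ball x r, ∀ z ∈ ball x r, ‖G z - G y - G' y (z - y)‖ ≤ K * ‖z - y‖ ^ 2)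
    (hflat : ∀ y ∈ ball x r, ∀ v w, G' y v w - G' y w v + G y v * G y w - G y w * G y v = 0)
    (hMr : (‖(1 : 𝔸)‖ + 1) * (M * r) ≤ 1) :
    ∃ A : E → 𝔸, A x = 1 ∧
      ∀ y ∈ ball x r, HasFDerivAt A ((ContinuousLinearMap.mul ℝ 𝔸 (A y)).comp (G y)) y := by
  have hmem : ∀ y ∈ ball (0 : E) r, ∀ t ∈ Icc (0 : ℝ) 1, x + t • y ∈ ball x r := by
    intro y hy t ht
    simp only [mem_ball, dist_self_add_left, norm_smul, Real.norm_eq_abs, abs_of_nonneg ht.1,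
      dist_zero_right] at hy ⊢
    nlinarith [ht.1, ht.2, norm_nonneg y]
  have hγ : ∀ (y : E) (t : ℝ), HasDerivAt (fun t : ℝ => x + t • y) y t := by
    intro y t
    simpa using ((hasDerivAt_id t).smul_const y).const_add x
  have hGγ : ∀ y ∈ ball (0 : E) r, ∀ t ∈ Icc (0 : ℝ) 1,
      HasDerivAt (fun t : ℝ => G (x + t • y)) (G' (x + t • y) y) t := by
    intro y hy t ht
    exact (hG _ (hmem y hy t ht)).comp_hasDerivAt t (hγ y t)
  have hbd : ∀ y ∈ ball (0 : E) r, ∀ t ∈ Icc (0 : ℝ) 1, ‖G (x + t • y) y‖ ≤ M * r := by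
    intro y hy t ht
    refine (ContinuousLinearMap.le_opNorm _ _).trans ?_
    gcongr
    · exact hGM _ (hmem y hy t ht)
    · exact (mem_ball_zero_iff.1 hy).le
  have hex : ∀ y : E, ∃ α : ℝ → 𝔸, y ∈ ball (0 : E) r → α 0 = 1 ∧
      (∀ t ∈ Icc (0 : ℝ) 1, HasDerivWithinAt α (α t * G (x + t • y) y) (Icc 0 1) t) ∧
      ∀ t ∈ Icc (0 : ℝ) 1, ‖α t‖ ≤ ‖(1 : 𝔸)‖ * Real.exp (M * r) := by
    intro y
    by_cases hy : y ∈ ball (0 : E) r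
    · obtain ⟨α, hα⟩ := aux_linear_ode (fun t => G (x + t • y) y)
        (fun t ht => ((hGγ y hy t ht).continuousAt.clm_apply continuousAt_const).continuousWithinAt)
        (M * r) (by positivity) (hbd y hy) hMr
      exact ⟨α, fun _ => hα⟩
    · exact ⟨0, fun h => absurd h hy⟩
  choose α hα using hex
  set Ca := ‖(1 : 𝔸)‖ * Real.exp (M * r) with hCa
  have hCa0 : 0 ≤ Ca := by positivity
  have key : ∀ y ∈ ball (0 : E) r, ∀ h : E, y + h ∈ ball (0 : E) r → ‖h‖ ≤ 1 →
      ‖α (y + h) 1 - α y 1 * (1 + G (x + y) h)‖ ≤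
        gronwallBound 0 (M * r) (Ca * ((K + K₁) + M * (M + K₁ + (K + K₁))) * ‖h‖ ^ 2) 1 := by
    intro y hy h hyh hh
    obtain ⟨a0, a1, a2⟩ := hα y hy
    obtain ⟨b0, b1, b2⟩ := hα (y + h) hyh
    have hder : ∀ t ∈ Icc (0 : ℝ) 1, HasDerivWithinAt
        (fun t : ℝ => α (y + h) t - α y t * (1 + t • G (x + t • y) h))
        (α (y + h) t * G (x + t • (y + h)) (y + h) -
          (α y t * G (x + t • y) y * (1 + t • G (x + t • y) h) +
            α y t * (t • G' (x + t • y) y h + (1 : ℝ) • G (x + t • y) h))) (Icc 0 1) t := by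
      intro t ht
      refine (b1 t ht).sub ((a1 t ht).mul ?_)
      refine HasDerivWithinAt.const_add _ ?_
      refine HasDerivAt.hasDerivWithinAt ?_
      refine (hasDerivAt_id t).smul ?_
      simpa using (hGγ y hy t ht).clm_apply (hasDerivAt_const t h)
    have := norm_le_gronwallBound_of_norm_deriv_right_le (δ := 0) (K := M * r)
      (ε := Ca * ((K + K₁) + M * (M + K₁ + (K + K₁))) * ‖h‖ ^ 2) (a := 0) (b := 1)
      (fun t ht => (hder t ht).continuousWithinAt)
      (fun t ht => (hder t (Ico_subset_Icc_self ht)).mono_of_mem_nhdsWithin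
        (Icc_mem_nhdsGE_of_mem ht))
      (by simp [a0, b0]) ?_ 1 (by simp)
    · simpa using this
    intro t ht'
    have ht := Ico_subset_Icc_self ht'
    have hy1 := hmem y hy t ht
    have hyh1 := hmem (y + h) hyh t ht
    set P := G (x + t • y) y with hP
    set H := G (x + t • y) h with hH
    set Q := G (x + t • (y + h)) (y + h) with hQ
    set D1 := G' (x + t • y) h y with hD1
    set D2 := G' (x + t • y) y h with hD2
    set ρ := Q - P - H - t • D1 with hρ
    have hD : D2 = D1 - P * H + H * P := by
      have := hflat _ hy1 y h
      rw [← sub_eq_zero, ← this]; noncomm_ring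
    have hQe : Q = P + H + t • D1 + ρ := by rw [hρ]; abel
    have e1 : α (y + h) t * Q - (α y t * P * (1 + t • H) + α y t * (t • D2 + (1 : ℝ) • H)) =
        (α (y + h) t - α y t * (1 + t • H)) * Q +
          α y t * (ρ + t • (H * (H + t • D1 + ρ))) := by
      have : α y t * (1 + t • H) * Q - (α y t * P * (1 + t • H) + α y t * (t • D2 + (1 : ℝ) • H))
          = α y t * (ρ + t • (H * (H + t • D1 + ρ))) := by
        rw [hD, hQe]
        simp only [mul_add, add_mul, mul_sub, smul_add, smul_sub, mul_one, one_smul,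
          smul_mul_assoc, mul_smul_comm, mul_assoc]
        abel
      rw [← this]; noncomm_ring
    have t0 := ht.1
    have t1 := ht.2
    have hH' : ‖H‖ ≤ M * ‖h‖ := (ContinuousLinearMap.le_opNorm _ _).trans
      (by gcongr; exact hGM _ hy1)
    have hyn : ‖y‖ ≤ 1 := (mem_ball_zero_iff.1 hy).le.trans hr1
    have hyhn : ‖y + h‖ ≤ 1 := (mem_ball_zero_iff.1 hyh).le.trans hr1
    have hD1' : ‖D1‖ ≤ K₁ * ‖h‖ := by
      calc ‖D1‖ ≤ ‖G' (x + t • y) h‖ * ‖y‖ := ContinuousLinearMap.le_opNorm _ _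
        _ ≤ (‖G' (x + t • y)‖ * ‖h‖) * 1 := by
          gcongr; exact ContinuousLinearMap.le_opNorm _ _
        _ ≤ (K₁ * ‖h‖) * 1 := by gcongr; exact hGK _ hy1
        _ = _ := mul_one _
    have htD1 : ‖t • D1‖ ≤ K₁ * ‖h‖ := by
      rw [norm_smul, Real.norm_eq_abs, abs_of_nonneg t0]
      nlinarith [norm_nonneg D1]
    have hρ' : ‖ρ‖ ≤ (K + K₁) * ‖h‖ ^ 2 := by
      have e2 : ρ = (G (x + t • (y + h)) - G (x + t • y) -
          G' (x + t • y) (x + t • (y + h) - (x + t • y))) (y + h) +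
          t • G' (x + t • y) h h := by
        have : x + t • (y + h) - (x + t • y) = t • h := by rw [smul_add]; abel
        rw [this]
        simp only [hρ, hQ, hP, hH, hD1, sub_apply, map_add, map_smul,
          smul_apply, smul_add]
        abel
      rw [e2]
      have := hT _ hy1 _ hyh1
      have e3 : ‖x + t • (y + h) - (x + t • y)‖ ≤ ‖h‖ := by
        have : x + t • (y + h) - (x + t • y) = t • h := by rw [smul_add]; abel
        rw [this, norm_smul, Real.norm_eq_abs, abs_of_nonneg t0]
        nlinarith [norm_nonneg h]
      have e4 : ‖t • G' (x + t • y) h h‖ ≤ K₁ * ‖h‖ ^ 2 := by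
        rw [norm_smul, Real.norm_eq_abs, abs_of_nonneg t0]
        calc t * ‖G' (x + t • y) h h‖ ≤ 1 * (‖G' (x + t • y)‖ * ‖h‖ * ‖h‖) := by
              gcongr
              exact ContinuousLinearMap.le_opNorm₂ _ _ _
          _ ≤ 1 * (K₁ * ‖h‖ * ‖h‖) := by gcongr; exact hGK _ hy1
          _ = _ := by ring
      refine (norm_add_le _ _).trans ?_
      rw [add_mul]
      refine add_le_add ?_ e4
      calc _ ≤ _ := ContinuousLinearMap.le_opNorm _ _
        _ ≤ (K * ‖h‖ ^ 2) * 1 := by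
          gcongr
          exact this.trans (by gcongr)
        _ = _ := mul_one _
    rw [e1]
    refine (norm_add_le _ _).trans (add_le_add ?_ ?_)
    · rw [mul_comm (M * r)]
      refine (norm_mul_le _ _).trans ?_
      gcongr
      exact hbd _ hyh t ht
    · refine (norm_mul_le _ _).trans ?_
      rw [mul_assoc Ca]
      refine mul_le_mul (a2 t ht) ?_ (norm_nonneg _) hCa0
      refine (norm_add_le _ _).trans ?_
      have hρ1 : ‖ρ‖ ≤ (K + K₁) * ‖h‖ := hρ'.trans (by
        gcongr; nlinarith [norm_nonneg h])
      have e5 : ‖H + t • D1 + ρ‖ ≤ (M + K₁ + (K + K₁)) * ‖h‖ := by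
        refine (norm_add₃_le).trans ?_
        linarith
      have e6 : ‖t • (H * (H + t • D1 + ρ))‖ ≤ M * ‖h‖ * ((M + K₁ + (K + K₁)) * ‖h‖) := by
        rw [norm_smul, Real.norm_eq_abs, abs_of_nonneg t0]
        calc t * ‖H * (H + t • D1 + ρ)‖ ≤ 1 * (‖H‖ * ‖H + t • D1 + ρ‖) := by
              gcongr; exact norm_mul_le _ _
          _ ≤ 1 * (M * ‖h‖ * ((M + K₁ + (K + K₁)) * ‖h‖)) := by gcongr
          _ = _ := one_mul _
      calc _ ≤ _ := add_le_add hρ' e6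
        _ = _ := by ring
  refine ⟨fun z => α (z - x) 1, ?_, ?_⟩
  · obtain ⟨a0, a1, a2⟩ := hα 0 (by simpa using hr)
    simp only [sub_self]
    have := (convex_Icc (0 : ℝ) 1).norm_image_sub_le_of_norm_hasDerivWithin_le (C := 0) (f := α 0)
      (f' := fun t => α 0 t * G (x + t • (0 : E)) 0) a1 (by simp)
      (show (0 : ℝ) ∈ Icc (0 : ℝ) 1 by simp) (show (1 : ℝ) ∈ Icc (0 : ℝ) 1 by simp)
    rw [zero_mul, norm_le_zero_iff, sub_eq_zero] at this
    rw [this, a0]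
  · intro z hz
    have hz0 : z - x ∈ ball (0 : E) r := by simpa [dist_eq_norm] using hz
    obtain ⟨C, hC⟩ : ∃ C, ∀ ε, gronwallBound 0 (M * r) ε 1 = C * ε := by
      by_cases h0 : M * r = 0
      · exact ⟨1, fun ε => by rw [h0, gronwallBound_K0]; simp⟩
      · exact ⟨(Real.exp (M * r) - 1) / (M * r), fun ε => by
          rw [gronwallBound_of_K_ne_0 h0]; field_simp; ring⟩
    rw [hasFDerivAt_iff_isLittleO_nhds_zero]
    refine Asymptotics.IsBigO.trans_isLittleO (g := fun h : E => ‖h‖ ^ 2) ?_ ?_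
    · refine Asymptotics.IsBigO.of_bound
        (C * (Ca * ((K + K₁) + M * (M + K₁ + (K + K₁))))) ?_
      have n1 : ∀ᶠ h : E in nhds 0, z + h ∈ ball x r := by
        have : Filter.Tendsto (fun h : E => z + h) (nhds 0) (nhds z) := by
          simpa using (continuous_const_add z).tendsto (0 : E)
        exact this (isOpen_ball.mem_nhds hz)
      have n2 : ∀ᶠ h : E in nhds 0, h ∈ ball (0 : E) 1 := ball_mem_nhds _ one_pos
      filter_upwards [n1, n2] with h h1 h2
      have h1' : z - x + h ∈ ball (0 : E) r := by
        rw [mem_ball_zero_iff]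
        rw [mem_ball, dist_eq_norm] at h1
        convert! h1 using 2
        abel
      have := key (z - x) hz0 h h1' (mem_ball_zero_iff.1 h2).le
      rw [hC] at this
      have e : α (z + h - x) 1 - α (z - x) 1 -
          ((ContinuousLinearMap.mul ℝ 𝔸 (α (z - x) 1)).comp (G z)) h =
          α (z - x + h) 1 - α (z - x) 1 * (1 + G (x + (z - x)) h) := by
        rw [show z + h - x = z - x + h by abel, add_sub_cancel]
        simp only [ContinuousLinearMap.comp_apply, ContinuousLinearMap.mul_apply', mul_add, mul_one]
        abel
      rw [e]
      refine this.trans (le_of_eq ?_)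
      rw [Real.norm_of_nonneg (by positivity)]
      ring
    · have := Asymptotics.isLittleO_norm_pow_id (E' := E) (one_lt_two)
      exact this

theorem aux_forward (n p : ℕ)
    (U : Set (Fin n → ℝ)) (hU : IsOpen U)
    (ω : (Fin n → ℝ) → ((Fin n → ℝ) [×p]→L[ℝ] ℝ))
    (hω : ContDiffOn ℝ (⊤ : ℕ∞) ω U)
    (V : Set (Fin n → ℝ)) (hV : IsOpen V) (hVU : V ⊆ U)
    (u : (Fin n → ℝ) → (Fin n → ℝ)) (hu : ContDiffOn ℝ (⊤ : ℕ∞) u V)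
    (hbij : ∀ y ∈ V, Function.Bijective (fderiv ℝ u y))
    (c : (Fin n → ℝ) [×p]→L[ℝ] ℝ)
    (hc : ∀ y ∈ V, ∀ v : Fin p → (Fin n → ℝ), ω y v = c (fun i => fderiv ℝ u y (v i))) :
    ∃ Γ : (Fin n → ℝ) → ((Fin n → ℝ) →L[ℝ] (Fin n → ℝ) →L[ℝ] (Fin n → ℝ)),
          ContDiffOn ℝ (⊤ : ℕ∞) Γ V ∧
          (∀ y ∈ V, ∀ v w : Fin n → ℝ, Γ y v w = Γ y w v) ∧
          (∀ y ∈ V, ∀ v w z : Fin n → ℝ,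
            fderiv ℝ (fun t => Γ t w z) y v - fderiv ℝ (fun t => Γ t v z) y w +
              Γ y v (Γ y w z) - Γ y w (Γ y v z) = 0) ∧
          (∀ y ∈ V, ∀ v : Fin n → ℝ, ∀ z : Fin p → (Fin n → ℝ),
            fderiv ℝ ω y v z =
              ∑ h : Fin p, ω y (Function.update z h (Γ y v (z h)))) := by
  have hu1 : ContDiffOn ℝ (⊤ : ℕ∞) (fderiv ℝ u) V :=
    ((contDiffOn_infty_iff_fderiv_of_isOpen hV).1 hu).2
  have hu2 : ContDiffOn ℝ (⊤ : ℕ∞) (fderiv ℝ (fderiv ℝ u)) V :=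
    ((contDiffOn_infty_iff_fderiv_of_isOpen hV).1 hu1).2
  have hunit : ∀ y ∈ V, IsUnit (fderiv ℝ u y) := fun y hy =>
    ContinuousLinearMap.isUnit_iff_bijective.2 (hbij y hy)
  set Γ : (Fin n → ℝ) → ((Fin n → ℝ) →L[ℝ] (Fin n → ℝ) →L[ℝ] (Fin n → ℝ)) := fun y =>
    (ContinuousLinearMap.compL ℝ (Fin n → ℝ) (Fin n → ℝ) (Fin n → ℝ)
      (Ring.inverse (fderiv ℝ u y))).comp (fderiv ℝ (fderiv ℝ u) y) with hΓ
  have hkey : ∀ y ∈ V, ∀ v w, fderiv ℝ u y (Γ y v w) = fderiv ℝ (fderiv ℝ u) y v w := by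
    intro y hy v w
    have := Ring.mul_inverse_cancel _ (hunit y hy)
    have := congrArg (fun L => L (fderiv ℝ (fderiv ℝ u) y v w)) this
    simpa [hΓ] using this
  have hsm : ContDiffOn ℝ (⊤ : ℕ∞) Γ V := by
    have hinv : ContDiffOn ℝ (⊤ : ℕ∞) (fun y => Ring.inverse (fderiv ℝ u y)) V := by
      intro y hy
      obtain ⟨e, he⟩ := hunit y hy
      have h1 := contDiffAt_ringInverse ℝ (n := (⊤ : ℕ∞)) e
      rw [he] at h1
      exact h1.comp_contDiffWithinAt y (hu1 y hy)
    exact ((ContinuousLinearMap.contDiff _).comp_contDiffOn hinv).clm_comp hu2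
  have symm2 : ∀ y ∈ V, ∀ v w, fderiv ℝ (fderiv ℝ u) y v w = fderiv ℝ (fderiv ℝ u) y w v := by
    intro y hy v w
    exact ((hu.contDiffAt (hV.mem_nhds hy)).isSymmSndFDerivAt
      (by rw [minSmoothness_of_isRCLikeNormedField]; exact WithTop.coe_le_coe.2 (le_top : (2 : ℕ∞) ≤ ⊤))) v w
  have symm3 : ∀ y ∈ V, ∀ v w, fderiv ℝ (fderiv ℝ (fderiv ℝ u)) y v w =
      fderiv ℝ (fderiv ℝ (fderiv ℝ u)) y w v := by
    intro y hy v w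
    exact ((hu1.contDiffAt (hV.mem_nhds hy)).isSymmSndFDerivAt
      (by rw [minSmoothness_of_isRCLikeNormedField]; exact WithTop.coe_le_coe.2 (le_top : (2 : ℕ∞) ≤ ⊤))) v w
  have hd1 : ∀ y ∈ V, HasFDerivAt (fderiv ℝ u) (fderiv ℝ (fderiv ℝ u) y) y := fun y hy =>
    ((hu1.contDiffAt (hV.mem_nhds hy)).differentiableAt (by simp)).hasFDerivAt
  have hd2 : ∀ y ∈ V, HasFDerivAt (fderiv ℝ (fderiv ℝ u)) (fderiv ℝ (fderiv ℝ (fderiv ℝ u)) y) y :=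
    fun y hy => ((hu2.contDiffAt (hV.mem_nhds hy)).differentiableAt (by simp)).hasFDerivAt
  have hdΓ : ∀ y ∈ V, HasFDerivAt Γ (fderiv ℝ Γ y) y := fun y hy =>
    ((hsm.contDiffAt (hV.mem_nhds hy)).differentiableAt (by simp)).hasFDerivAt
  refine ⟨Γ, hsm, ?_, ?_, ?_⟩
  · intro y hy v w
    apply (hbij y hy).1
    rw [hkey y hy, hkey y hy, symm2 y hy]
  · intro y hy v w z
    have d : ∀ v w, fderiv ℝ (fderiv ℝ u) y v (Γ y w z) +
        fderiv ℝ u y (fderiv ℝ (fun t => Γ t w z) y v) =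
        fderiv ℝ (fderiv ℝ (fderiv ℝ u)) y v w z := by
      intro v w
      have h0 : HasFDerivAt (fun t => Γ t w z) (fderiv ℝ (fun t => Γ t w z) y) y :=
        (((hdΓ y hy).differentiableAt.clm_apply (differentiableAt_const w)).clm_apply
          (differentiableAt_const z)).hasFDerivAt
      have h1 := (hd1 y hy).clm_apply h0
      have h2 := ((hd2 y hy).clm_apply (hasFDerivAt_const w y)).clm_apply (hasFDerivAt_const z y)
      have heq : (fun t => fderiv ℝ u t (Γ t w z)) =ᶠ[nhds y]
          (fun t => fderiv ℝ (fderiv ℝ u) t w z) := by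
        filter_upwards [hV.mem_nhds hy] with t ht using hkey t ht w z
      have h3 := (h2.congr_of_eventuallyEq heq).unique h1
      have h4 := congrArg (fun L => L v) h3
      simp at h4
      rw [h4]; abel
    apply (hbij y hy).1
    have e1 := d v w
    have e2 := d w v
    rw [symm3 y hy v w, ← e2] at e1
    simp only [map_sub, map_add, map_zero, hkey y hy]
    rw [sub_eq_zero]
    have : fderiv ℝ u y (fderiv ℝ (fun t => Γ t w z) y v) =
      fderiv ℝ (fderiv ℝ u) y w (Γ y v z) + fderiv ℝ u y (fderiv ℝ (fun t => Γ t v z) y w) -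
        fderiv ℝ (fderiv ℝ u) y v (Γ y w z) := by rw [← e1]; abel
    rw [this]; abel
  · intro y hy v z
    have hωd : HasFDerivAt ω (fderiv ℝ ω y) y :=
      ((hω.contDiffAt (hU.mem_nhds (hVU hy))).differentiableAt (by simp)).hasFDerivAt
    have h1 := hωd.continuousMultilinear_apply_const z
    have h2 : HasFDerivAt (fun y => fun i => fderiv ℝ u y (z i))
        (ContinuousLinearMap.pi fun i => (fderiv ℝ (fderiv ℝ u) y).flip (z i)) y := by
      rw [hasFDerivAt_pi]
      intro i
      simpa using (hd1 y hy).clm_apply (hasFDerivAt_const (z i) y)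
    have h3 := (c.hasFDerivAt (fun i => fderiv ℝ u y (z i))).comp y h2
    have heq : (fun y => ω y z) =ᶠ[nhds y] (c ∘ fun y i => fderiv ℝ u y (z i)) := by
      filter_upwards [hV.mem_nhds hy] with t ht using hc t ht z
    have h4 := congrArg (fun L => L v) (h1.unique (h3.congr_of_eventuallyEq heq))
    simp only [ContinuousLinearMap.comp_apply, ContinuousMultilinearMap.linearDeriv_apply] at h4
    refine Eq.trans ?_ (h4.trans ?_)
    · simp
    · refine Finset.sum_congr rfl fun i _ => ?_
      rw [hc y hy]
      congr 1
      funext j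
      by_cases hj : j = i
      · subst hj; simp [hkey y hy]
      · simp [hj]

theorem aux_ev_norm_lt {X F : Type*} [TopologicalSpace X] [NormedAddCommGroup F] (f : X → F)
    (x : X) (hf : ContinuousAt f x) : ∀ᶠ y in nhds x, ‖f y‖ < ‖f x‖ + 1 :=
  hf.norm.eventually_lt_const (lt_add_one _)

theorem aux_total_ode_local {E 𝔸 : Type*} [NormedAddCommGroup E] [NormedSpace ℝ E]
    [NormedRing 𝔸] [NormedAlgebra ℝ 𝔸] [CompleteSpace 𝔸]
    (G : E → E →L[ℝ] 𝔸) (x : E) (V : Set E) (hV : IsOpen V) (hxV : x ∈ V)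
    (hG : ContDiffOn ℝ (⊤ : ℕ∞) G V)
    (hflat : ∀ y ∈ V, ∀ v w,
      fderiv ℝ G y v w - fderiv ℝ G y w v + G y v * G y w - G y w * G y v = 0) :
    ∃ r : ℝ, 0 < r ∧ ball x r ⊆ V ∧ ∃ A : E → 𝔸, A x = 1 ∧
      (∀ y ∈ ball x r, HasFDerivAt A ((ContinuousLinearMap.mul ℝ 𝔸 (A y)).comp (G y)) y) ∧
      ContDiffOn ℝ (⊤ : ℕ∞) A (ball x r) := by
  have hG1 : ContDiffOn ℝ (⊤ : ℕ∞) (fderiv ℝ G) V :=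
    ((contDiffOn_infty_iff_fderiv_of_isOpen hV).1 hG).2
  have hdG : ∀ y ∈ V, HasFDerivAt G (fderiv ℝ G y) y := fun y hy =>
    ((hG.contDiffAt (hV.mem_nhds hy)).differentiableAt (by simp)).hasFDerivAt
  have hxn := hV.mem_nhds hxV
  -- constants
  set M := ‖G x‖ + 1 with hM
  set K₁ := ‖fderiv ℝ G x‖ + 1 with hK₁
  have hM0 : 0 < M := by positivity
  have hK₁0 : 0 < K₁ := by positivity
  have ev1 : ∀ᶠ y in nhds x, ‖G y‖ < M :=
    (hG.contDiffAt hxn).continuousAt.norm.eventually_lt_const (by simp [hM])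
  have ev2 : ∀ᶠ y in nhds x, ‖fderiv ℝ G y‖ < K₁ :=
    aux_ev_norm_lt (fderiv ℝ G) x (hG1.contDiffAt hxn).continuousAt
  obtain ⟨K, s, hs, hKs⟩ := ((hG1.contDiffAt hxn).of_le
    (m := 1) (by exact_mod_cast (le_top : (1 : ℕ∞) ≤ ⊤))).exists_lipschitzOnWith
  obtain ⟨r₀, hr₀, hball⟩ := Metric.eventually_nhds_iff_ball.1
    (ev1.and (ev2.and ((Filter.eventually_mem_set.2 hs).and (Filter.eventually_mem_set.2 hxn))))
  set N := ‖(1 : 𝔸)‖ + 1 with hN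
  have hN0 : 0 < N := by positivity
  set r := min r₀ (min 1 (1 / (N * M))) with hr
  have hr0 : 0 < r := by positivity
  have hrr : ball x r ⊆ ball x r₀ := ball_subset_ball (min_le_left _ _)
  have hrV : ball x r ⊆ V := fun y hy => (hball y (hrr hy)).2.2.2
  obtain ⟨A, hAx, hA⟩ := aux_total_ode G (fderiv ℝ G) x r M K₁ K hr0
    ((min_le_right _ _).trans (min_le_left _ _)) hM0.le hK₁0.le K.2
    (fun y hy => hdG y (hrV hy))
    (fun y hy => (hball y (hrr hy)).1.le)
    (fun y hy => (hball y (hrr hy)).2.1.le)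
    (by
      intro y hy z hz
      have hseg : segment ℝ y z ⊆ ball x r := (convex_ball x r).segment_subset hy hz
      have := Convex.norm_image_sub_le_of_norm_hasFDerivWithin_le' (s := segment ℝ y z)
        (f := G) (f' := fderiv ℝ G) (φ := fderiv ℝ G y) (C := K * ‖z - y‖) (x := y) (y := z)
        (fun w hw => (hdG w (hrV (hseg hw))).hasFDerivWithinAt)
        (fun w hw => by
          have h1 := hKs.dist_le_mul w (hball w (hrr (hseg hw))).2.2.1 y
            (hball y (hrr hy)).2.2.1
          rw [dist_eq_norm, dist_eq_norm] at h1
          refine h1.trans ?_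
          gcongr
          exact norm_sub_le_of_mem_segment hw)
        (convex_segment _ _) (left_mem_segment _ _ _) (right_mem_segment _ _ _)
      refine this.trans (le_of_eq ?_)
      ring)
    (fun y hy => hflat y (hrV hy))
    (by
      have : r ≤ 1 / (N * M) := (min_le_right _ _).trans (min_le_right _ _)
      rw [le_div_iff₀ (by positivity)] at this
      linarith)
  -- smoothness of A
  refine ⟨r, hr0, hrV, A, hAx, hA, ?_⟩
  rw [contDiffOn_infty]
  intro k
  induction k with
  | zero =>
    exact contDiffOn_zero.2 fun y hy => (hA y hy).continuousAt.continuousWithinAt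
  | succ k ih =>
    push_cast
    rw [contDiffOn_succ_iff_hasFDerivWithinAt_of_uniqueDiffOn isOpen_ball.uniqueDiffOn]
    refine ⟨by simp, _, ?_, fun y hy => (hA y hy).hasFDerivWithinAt⟩
    refine ContDiffOn.clm_comp ?_ ((hG.mono hrV).of_le (by exact_mod_cast le_top))
    exact (ContinuousLinearMap.contDiff _).comp_contDiffOn ih


theorem aux_backward (n p : ℕ)
    (U : Set (Fin n → ℝ)) (hU : IsOpen U)
    (ω : (Fin n → ℝ) → ((Fin n → ℝ) [×p]→L[ℝ] ℝ))
    (hω : ContDiffOn ℝ (⊤ : ℕ∞) ω U) (x : Fin n → ℝ)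
    (V : Set (Fin n → ℝ)) (hV : IsOpen V) (hxV : x ∈ V) (hVU : V ⊆ U)
    (Γ : (Fin n → ℝ) → ((Fin n → ℝ) →L[ℝ] (Fin n → ℝ) →L[ℝ] (Fin n → ℝ)))
    (hΓ : ContDiffOn ℝ (⊤ : ℕ∞) Γ V)
    (htor : ∀ y ∈ V, ∀ v w : Fin n → ℝ, Γ y v w = Γ y w v)
    (hflat : ∀ y ∈ V, ∀ v w z : Fin n → ℝ,
            fderiv ℝ (fun t => Γ t w z) y v - fderiv ℝ (fun t => Γ t v z) y w +
              Γ y v (Γ y w z) - Γ y w (Γ y v z) = 0)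
    (hpar : ∀ y ∈ V, ∀ v : Fin n → ℝ, ∀ z : Fin p → (Fin n → ℝ),
            fderiv ℝ ω y v z =
              ∑ h : Fin p, ω y (Function.update z h (Γ y v (z h)))) :
    HasConstantCoefficientsFormAt n p U ω x := by
  have hdΓ : ∀ y ∈ V, HasFDerivAt Γ (fderiv ℝ Γ y) y := fun y hy =>
    ((hΓ.contDiffAt (hV.mem_nhds hy)).differentiableAt (by simp)).hasFDerivAt
  have hdω : ∀ y ∈ V, HasFDerivAt ω (fderiv ℝ ω y) y := fun y hy =>
    ((hω.contDiffAt (hU.mem_nhds (hVU hy))).differentiableAt (by simp)).hasFDerivAt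
  obtain ⟨r, hr0, hrV, A, hAx, hA, hAsm⟩ := aux_total_ode_local Γ x V hV hxV hΓ
    (by
      intro y hyV v w
      ext1 z
      have d : ∀ v w, fderiv ℝ (fun t => Γ t w z) y v = fderiv ℝ Γ y v w z := by
        intro v w
        have := ((hdΓ y hyV).clm_apply (hasFDerivAt_const w y)).clm_apply (hasFDerivAt_const z y)
        rw [this.fderiv]
        simp
      have := hflat y hyV v w z
      rw [d, d] at this
      simpa using this)
  obtain ⟨u, hu⟩ := (convex_ball x r).exists_forall_hasFDerivAt_of_fderiv_symmetric isOpen_ball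
    (ω := A) (fun y hy => (hA y hy).differentiableAt.differentiableWithinAt)
    (fun y hy v w => by
      rw [(hA y hy).fderiv]
      simp [htor y (hrV hy) v w])
  have husm : ContDiffOn ℝ (⊤ : ℕ∞) u (ball x r) := by
    rw [contDiffOn_infty_iff_fderiv_of_isOpen isOpen_ball]
    exact ⟨fun y hy => (hu y hy).differentiableAt.differentiableWithinAt,
      hAsm.congr fun y hy => (hu y hy).fderiv⟩
  have hxr : x ∈ ball x r := mem_ball_self hr0
  have hux : HasFDerivAt u ((ContinuousLinearEquiv.refl ℝ (Fin n → ℝ) :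
      (Fin n → ℝ) →L[ℝ] (Fin n → ℝ))) x := by
    have := hu x hxr
    rw [hAx] at this
    exact this
  have hucd : ContDiffAt ℝ (⊤ : ℕ∞) u x := husm.contDiffAt (isOpen_ball.mem_nhds hxr)
  set e := hucd.toOpenPartialHomeomorph u hux (by simp) with he
  have hxe : x ∈ e.source := hucd.mem_toOpenPartialHomeomorph_source hux (by simp)
  have evU : ∀ᶠ y in nhds x, IsUnit (A y) := by
    have h1 : ∀ᶠ a in nhds (A x), IsUnit a := Units.isOpen.mem_nhds (by rw [hAx]; exact isUnit_one)
    exact (hA x hxr).continuousAt.eventually h1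
  obtain ⟨r₂, hr₂, hball₂⟩ := Metric.eventually_nhds_iff_ball.1
    (evU.and (isOpen_ball.eventually_mem hxr))
  have hconst : ∀ y ∈ ball x r₂, ∀ z : Fin p → Fin n → ℝ,
      ω y (fun i => Ring.inverse (A y) (z i)) = ω x z := by
    intro y hy z
    have hder : ∀ w ∈ ball x r₂, HasFDerivAt (𝕜 := ℝ)
        (fun y : Fin n → ℝ => ω y (fun i => Ring.inverse (A y) (z i)))
        (0 : (Fin n → ℝ) →L[ℝ] ℝ) w := by
      intro w hw
      obtain ⟨⟨a, ha⟩, hwr⟩ := hball₂ w hw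
      have h1 := hasFDerivAt_ringInverse (𝕜 := ℝ) a
      rw [ha] at h1
      have h2 := h1.comp w (hA w hwr)
      have h3 : HasFDerivAt (𝕜 := ℝ) (fun y : Fin n → ℝ => fun i => Ring.inverse (A y) (z i)) _ w :=
        hasFDerivAt_pi.2 (fun i => h2.clm_apply (hasFDerivAt_const (z i) w))
      have h4 := (ContinuousMultilinearMap.hasStrictFDerivAt_uncurry (𝕜 := ℝ)
        (ω w, fun i => Ring.inverse (A w) (z i))).hasFDerivAt.comp w
          ((hdω w (hrV hwr)).prodMk h3)
      refine h4.congr_fderiv ?_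
      ext1 v
      have hinv : Ring.inverse (A w) = (↑a⁻¹ : (Fin n → ℝ) →L[ℝ] (Fin n → ℝ)) := by
        rw [← ha, Ring.inverse_unit]
      have hcancel : ∀ ζ, (↑a⁻¹ : (Fin n → ℝ) →L[ℝ] (Fin n → ℝ)) (A w ζ) = ζ := by
        intro ζ
        have := congrArg (fun L => L ζ) a.inv_mul
        rw [← ha]
        exact this
      simp only [ContinuousLinearMap.comp_apply, add_apply, ContinuousLinearMap.prod_apply,
        ContinuousLinearMap.coe_fst', ContinuousLinearMap.coe_snd',
        ContinuousMultilinearMap.linearDeriv_apply, ContinuousMultilinearMap.apply_apply,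
        hpar w (hrV hwr), zero_apply]
      rw [← Finset.sum_add_distrib]
      refine Finset.sum_eq_zero fun i _ => ?_
      rw [← ContinuousMultilinearMap.map_update_add]
      refine ContinuousMultilinearMap.map_coord_zero _ i ?_
      simp [hinv, hcancel]
    have hc := (convex_ball x r₂).is_const_of_fderivWithin_eq_zero (𝕜 := ℝ)
      (fun w hw => (hder w hw).differentiableAt.differentiableWithinAt)
      (fun w hw => by
        rw [fderivWithin_of_isOpen isOpen_ball hw, (hder w hw).fderiv]) hy (mem_ball_self hr₂)
    rw [hc, hAx]
    simp
  refine ⟨e.source ∩ ball x r₂, e.open_source.inter isOpen_ball, ⟨hxe, mem_ball_self hr₂⟩,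
    fun y hy => hVU (hrV (hball₂ y hy.2).2), u,
    husm.mono fun y hy => (hball₂ y hy.2).2, ?_, ?_, ?_, ω x, ?_⟩
  · exact e.injOn.mono inter_subset_left
  · exact e.isOpen_image_of_subset_source (e.open_source.inter isOpen_ball) inter_subset_left
  · intro y hy
    rw [(hu y (hball₂ y hy.2).2).fderiv]
    exact ContinuousLinearMap.isUnit_iff_bijective.1 (hball₂ y hy.2).1
  · intro y hy v
    rw [(hu y (hball₂ y hy.2).2).fderiv, ← hconst y hy.2]
    congr 1
    funext i
    have := Ring.inverse_mul_cancel _ (hball₂ y hy.2).1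
    have := congrArg (fun L => L (v i)) this
    simpa using this.symm

end AuxFlat

/-- Proposition 2.1, covariant case: a smooth `p`-form `ω` has
constant coefficients near `x` iff there are an open neighbourhood `V ∋ x` and a
smooth torsion-free flat Christoffel field `Γ` on `V` with `∇ω = 0` on `V`, i.e.
`(Dω_y(v))(z₁,…,z_p) = Σ_h ω_y(z₁,…,Γ_y(v,z_h),…,z_p)`. -/
theorem constantCoefficientsForm_iff_flatConnection (n p : ℕ)
    (U : Set (Fin n → ℝ)) (hU : IsOpen U)
    (ω : (Fin n → ℝ) → ((Fin n → ℝ) [×p]→L[ℝ] ℝ))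
    (hω : ContDiffOn ℝ (⊤ : ℕ∞) ω U)
    (halt : ∀ y ∈ U, ∀ v : Fin p → (Fin n → ℝ), ∀ i j, i ≠ j → v i = v j → ω y v = 0)
    (x : Fin n → ℝ) (hx : x ∈ U) :
    HasConstantCoefficientsFormAt n p U ω x ↔
      ∃ V : Set (Fin n → ℝ), IsOpen V ∧ x ∈ V ∧ V ⊆ U ∧
        ∃ Γ : (Fin n → ℝ) → ((Fin n → ℝ) →L[ℝ] (Fin n → ℝ) →L[ℝ] (Fin n → ℝ)),
          ContDiffOn ℝ (⊤ : ℕ∞) Γ V ∧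
          -- torsion-free
          (∀ y ∈ V, ∀ v w : Fin n → ℝ, Γ y v w = Γ y w v) ∧
          -- flat (vanishing curvature)
          (∀ y ∈ V, ∀ v w z : Fin n → ℝ,
            fderiv ℝ (fun t => Γ t w z) y v - fderiv ℝ (fun t => Γ t v z) y w +
              Γ y v (Γ y w z) - Γ y w (Γ y v z) = 0) ∧
          -- ∇ω = 0
          (∀ y ∈ V, ∀ v : Fin n → ℝ, ∀ z : Fin p → (Fin n → ℝ),
            fderiv ℝ ω y v z =
              ∑ h : Fin p, ω y (Function.update z h (Γ y v (z h)))) := by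
  constructor
  · rintro ⟨V, hV, hxV, hVU, u, hu, _, _, hbij, c, hc⟩
    exact ⟨V, hV, hxV, hVU, aux_forward n p U hU ω hω V hV hVU u hu hbij c hc⟩
  · rintro ⟨V, hV, hxV, hVU, Γ, hΓ, htor, hflat, hpar⟩
    exact aux_backward n p U hU ω hω x V hV hxV hVU Γ hΓ htor hflat hpar
end

section
/- Let ω be a smooth p-form and V a smooth q-vector field on an open set U ⊆ ℝⁿ, and x ∈ U. Then: (i) ω has constant coefficients on a neighbourhood of x if and only if there exist an open neighbourhood V₀ ⊆ U of x and a smooth map u : V₀ → ℝⁿ with Du_y invertible for every y ∈ V₀, such that for all y ∈ V₀, all j = 1,…,n and all z₁,…,z_p ∈ {e₁,…,eₙ}: (Dω_y(e_j))(z₁,…,z_p) = Σ_{h=1}^{p} ω_y(z₁,…,Γ_y(e_j,z_h),…,z_p), where Γ_y(v,w) = (Du_y)⁻¹(D²u_y(v,w)). (ii) V has constant coefficients on a neighbourhood of x if and only if there exist such V₀ and u with: for all y ∈ V₀, all j and all covectors w₁,…,w_q ∈ {ε¹,…,εⁿ}: (DV_y(e_j))(w₁,…,w_q) = − Σ_{h=1}^{q}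 V_y(w₁,…, w_h ∘ Γ_y(e_j,·),…, w_q). -/
/-- Constant coefficients for a `q`-vector field (see context). -/
def HasConstantCoefficientsVecAt (n q : ℕ) (U : Set (Fin n → ℝ))
    (V : (Fin n → ℝ) → (((Fin n → ℝ) →L[ℝ] ℝ) [×q]→L[ℝ] ℝ)) (x : Fin n → ℝ) : Prop :=
  ∃ W : Set (Fin n → ℝ), IsOpen W ∧ x ∈ W ∧ W ⊆ U ∧
    ∃ u : (Fin n → ℝ) → (Fin n → ℝ),
      ContDiffOn ℝ (⊤ : ℕ∞) u W ∧ Set.InjOn u W ∧ IsOpen (u '' W) ∧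
      (∀ y ∈ W, Function.Bijective (fderiv ℝ u y)) ∧
      ∃ c : ((Fin n → ℝ) →L[ℝ] ℝ) [×q]→L[ℝ] ℝ,
        ∀ y ∈ W, ∀ w : Fin q → ((Fin n → ℝ) →L[ℝ] ℝ),
          c w = V y (fun i => (w i).comp (fderiv ℝ u y))

section Helpers

variable {X F : Type*} [NormedAddCommGroup X] [NormedSpace ℝ X]
  [NormedAddCommGroup F] [NormedSpace ℝ F]

/-- The covariant differential of a multilinear field, evaluated at `z`. -/
noncomputable def covD {p : ℕ} (f' : X →L[ℝ] (F [×p]→L[ℝ] ℝ)) (g : F [×p]→L[ℝ] ℝ)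
    (S : X →L[ℝ] F →L[ℝ] F) (z : Fin p → F) : X →L[ℝ] ℝ :=
  ContinuousMultilinearMap.apply ℝ (fun _ : Fin p => F) ℝ z ∘L f' +
    ∑ i, g.toContinuousLinearMap z i ∘L (ContinuousLinearMap.apply ℝ F (z i) ∘L S)

lemma covD_apply {p : ℕ} (f' : X →L[ℝ] (F [×p]→L[ℝ] ℝ)) (g : F [×p]→L[ℝ] ℝ)
    (S : X →L[ℝ] F →L[ℝ] F) (z : Fin p → F) (e : X) :
    covD f' g S z e = f' e z + ∑ i, g (Function.update z i (S e (z i))) := by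
  simp [covD]

lemma covD_hasFDerivAt {p : ℕ} {f : X → (F [×p]→L[ℝ] ℝ)} {f' : X →L[ℝ] (F [×p]→L[ℝ] ℝ)}
    {B : X → F →L[ℝ] F} {B' : X →L[ℝ] F →L[ℝ] F} {S : X →L[ℝ] F →L[ℝ] F} {y : X}
    (hf : HasFDerivAt f f' y) (hB : HasFDerivAt B B' y)
    (hS : ∀ e w, B' e w = S e (B y w)) (w : Fin p → F) :
    HasFDerivAt (fun t => f t (fun i => B t (w i)))
      (covD f' (f y) S (fun i => B y (w i))) y := by
  have h := hf.continuousMultilinearMap_apply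
    (g := fun i t => B t (w i)) (g' := fun i => ContinuousLinearMap.apply ℝ F (w i) ∘L B')
    (fun i => (ContinuousLinearMap.apply ℝ F (w i)).hasFDerivAt.comp y hB)
  convert! h using 1
  ext e
  simp [covD, hS]

lemma covD_eq_zero {p : ℕ} {κ ι : Type*} (bX : Module.Basis κ ℝ X) (bF : Module.Basis ι ℝ F)
    {f' : X →L[ℝ] (F [×p]→L[ℝ] ℝ)} {g : F [×p]→L[ℝ] ℝ} {S : X →L[ℝ] F →L[ℝ] F}
    (h : ∀ j (s : Fin p → ι), covD f' g S (fun i => bF (s i)) (bX j) = 0)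
    (z : Fin p → F) : covD f' g S z = 0 := by
  have key : ∀ j, (f' (bX j)).toMultilinearMap + ∑ i, g.toMultilinearMap.compLinearMap
      (Function.update (fun _ => LinearMap.id) i (S (bX j) : F →ₗ[ℝ] F)) = 0 := by
    intro j
    have aux : ∀ z : Fin p → F, ((f' (bX j)).toMultilinearMap +
        ∑ i, g.toMultilinearMap.compLinearMap
      (Function.update (fun _ => LinearMap.id) i (S (bX j) : F →ₗ[ℝ] F))) z
        = covD f' g S z (bX j) := by
      intro z
      rw [covD_apply]
      simp only [add_apply, sum_apply,
        MultilinearMap.compLinearMap_apply, ContinuousMultilinearMap.coe_coe]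
      congr 1
      refine Finset.sum_congr rfl fun i _ => ?_
      congr 1
      ext k
      by_cases hk : k = i
      · subst hk; simp
      · simp [hk]
    refine Module.Basis.ext_multilinear (fun _ => bF) fun s => ?_
    rw [aux, h]; rfl
  apply ContinuousLinearMap.coe_injective
  refine bX.ext fun j => ?_
  have := congrArg (fun m => m z) (key j)
  simp only [add_apply, sum_apply,
        MultilinearMap.compLinearMap_apply, ContinuousMultilinearMap.coe_coe] at this
  rw [ContinuousLinearMap.coe_coe, covD_apply]
  refine Eq.trans ?_ this
  congr 1
  refine Finset.sum_congr rfl fun i _ => ?_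
  congr 1
  ext k
  by_cases hk : k = i
  · subst hk; simp
  · simp [hk]

lemma covD_of_const {p : ℕ} {f : X → (F [×p]→L[ℝ] ℝ)} {f' : X →L[ℝ] (F [×p]→L[ℝ] ℝ)}
    {B : X → F →L[ℝ] F} {B' : X →L[ℝ] F →L[ℝ] F} {S : X →L[ℝ] F →L[ℝ] F} {y : X}
    (hf : HasFDerivAt f f' y) (hB : HasFDerivAt B B' y)
    (hS : ∀ e w, B' e w = S e (B y w)) (hsurj : Function.Surjective (B y))
    {V : Set X} (hVo : IsOpen V) (hy : y ∈ V) (c : (Fin p → F) → ℝ)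
    (hc : ∀ t ∈ V, ∀ w : Fin p → F, f t (fun i => B t (w i)) = c w) (z : Fin p → F) :
    covD f' (f y) S z = 0 := by
  choose w hw using fun i => hsurj (z i)
  have h := covD_hasFDerivAt hf hB hS w
  simp only [hw] at h
  have h2 : HasFDerivAt (fun t => f t (fun i => B t (w i))) (0 : X →L[ℝ] ℝ) y := by
    refine (hasFDerivAt_const (c w) y).congr_of_eventuallyEq ?_
    filter_upwards [hVo.mem_nhds hy] with t ht using hc t ht w
  exact h.unique h2

lemma const_of_covD {p : ℕ} {f : X → (F [×p]→L[ℝ] ℝ)} {f' : X → X →L[ℝ] (F [×p]→L[ℝ] ℝ)}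
    {B : X → F →L[ℝ] F} {B' : X → X →L[ℝ] F →L[ℝ] F} {S : X → X →L[ℝ] F →L[ℝ] F}
    {V : Set X} (hVo : IsOpen V) (hVc : IsPreconnected V)
    (hf : ∀ y ∈ V, HasFDerivAt f (f' y) y) (hB : ∀ y ∈ V, HasFDerivAt B (B' y) y)
    (hS : ∀ y ∈ V, ∀ e w, B' y e w = S y e (B y w))
    (h0 : ∀ y ∈ V, ∀ z, covD (f' y) (f y) (S y) z = 0)
    {x y : X} (hx : x ∈ V) (hy : y ∈ V) (w : Fin p → F) :
    f y (fun i => B y (w i)) = f x (fun i => B x (w i)) := by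
  have hd : ∀ t ∈ V, HasFDerivAt (fun t => f t (fun i => B t (w i))) (0 : X →L[ℝ] ℝ) t := by
    intro t ht
    have := covD_hasFDerivAt (hf t ht) (hB t ht) (hS t ht) w
    rwa [h0 t ht] at this
  exact hVo.is_const_of_fderiv_eq_zero (𝕜 := ℝ) (f := fun t => f t (fun i => B t (w i))) hVc
    (fun t ht => (hd t ht).differentiableAt.differentiableWithinAt)
    (fun t ht => (hd t ht).fderiv) hy hx

lemma isInvertible_of_bij [CompleteSpace F] {A : F →L[ℝ] F} (h : Function.Bijective A) :
    A.IsInvertible :=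
  ⟨ContinuousLinearEquiv.ofBijective A (LinearMap.ker_eq_bot.2 h.1) (LinearMap.range_eq_top.2 h.2),
    by ext; simp⟩

lemma inverse_hasFDerivAt [CompleteSpace F] {A : X → F →L[ℝ] F} {A' : X →L[ℝ] F →L[ℝ] F} {y : X}
    {V : Set X} (hVo : IsOpen V) (hy : y ∈ V) (hA : HasFDerivAt A A' y)
    (hinv : ∀ t ∈ V, (A t).IsInvertible)
    {Γ : X →L[ℝ] F →L[ℝ] F} (hΓ : ∀ e w, A y (Γ e w) = A' e w) :
    ∃ B' : X →L[ℝ] F →L[ℝ] F, HasFDerivAt (fun t => (A t).inverse) B' y ∧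
      ∀ e w, B' e w = (-Γ) e ((A y).inverse w) := by
  have hd : DifferentiableAt ℝ (fun t => (A t).inverse) y :=
    (((hinv y hy).contDiffAt_map_inverse (n := 1)).differentiableAt (by simp)).comp y
      hA.differentiableAt
  refine ⟨_, hd.hasFDerivAt, fun e w => ?_⟩
  set B' := fderiv ℝ (fun t => (A t).inverse) y with hB'
  have h1 := (hA.clm_comp hd.hasFDerivAt)
  have h2 : HasFDerivAt (fun t => (A t).comp (A t).inverse) (0 : X →L[ℝ] F →L[ℝ] F) y := by
    refine (hasFDerivAt_const (ContinuousLinearMap.id ℝ F) y).congr_of_eventuallyEq ?_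
    filter_upwards [hVo.mem_nhds hy] with t ht using (hinv t ht).self_comp_inverse
  have h3 := congrArg (fun L => L e w) (h1.unique h2)
  simp at h3
  apply (hinv y hy).injective
  simp only [neg_apply, map_neg, hΓ]
  exact eq_neg_of_add_eq_zero_left h3

lemma cmm_map_update_neg {p : ℕ} (g : F [×p]→L[ℝ] ℝ) (z : Fin p → F) (i : Fin p) (a : F) :
    g (Function.update z i (-a)) = -g (Function.update z i a) :=
  map_neg (g.toContinuousLinearMap z i) a

lemma clm_comp_hasFDerivAt {G H : Type*} [NormedAddCommGroup G] [NormedSpace ℝ G]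
    [NormedAddCommGroup H] [NormedSpace ℝ H] (L : G →L[ℝ] H) {g : X → G} {g' : X →L[ℝ] G} {y : X}
    (hg : HasFDerivAt g g' y) : HasFDerivAt (fun t => L (g t)) (L.comp g') y :=
  L.hasFDerivAt.comp y hg

/-- Precomposition `A ↦ (w ↦ w ∘ A)`, linear in `A`. -/
noncomputable def precompL : (F →L[ℝ] F) →L[ℝ] (F →L[ℝ] ℝ) →L[ℝ] (F →L[ℝ] ℝ) :=
  (ContinuousLinearMap.compL ℝ F F ℝ).flip

lemma precompL_apply (A : F →L[ℝ] F) (w : F →L[ℝ] ℝ) : precompL A w = w.comp A := by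
  simp [precompL]

lemma precompL_hasFDerivAt {A : X → F →L[ℝ] F} {A' : X →L[ℝ] F →L[ℝ] F} {y : X}
    (hA : HasFDerivAt A A' y) :
    HasFDerivAt (fun t => precompL (A t)) (precompL.comp A') y := by
  exact clm_comp_hasFDerivAt (G := F →L[ℝ] F) (H := (F →L[ℝ] ℝ) →L[ℝ] (F →L[ℝ] ℝ))
    (precompL (F := F)) hA

end Helpers

section Local

variable {n : ℕ}

lemma fderiv_hasFDerivAt {V : Set (Fin n → ℝ)} (hVo : IsOpen V)
    {u : (Fin n → ℝ) → (Fin n → ℝ)} (hu : ContDiffOn ℝ (⊤ : ℕ∞) u V) {y : Fin n → ℝ}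
    (hy : y ∈ V) : HasFDerivAt (fderiv ℝ u) (fderiv ℝ (fderiv ℝ u) y) y := by
  have h : ContDiffAt ℝ 2 u y := (hu.contDiffAt (hVo.mem_nhds hy)).of_le (by
    have : ((2 : ℕ∞) : WithTop ℕ∞) ≤ ((⊤ : ℕ∞) : WithTop ℕ∞) := WithTop.coe_le_coe.2 le_top
    exact this)
  exact ((h.fderiv_right (m := 1) (by norm_num)).differentiableAt (by simp)).hasFDerivAt

lemma fderiv2_apply {V : Set (Fin n → ℝ)} (hVo : IsOpen V)
    {u : (Fin n → ℝ) → (Fin n → ℝ)} (hu : ContDiffOn ℝ (⊤ : ℕ∞) u V) {y : Fin n → ℝ}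
    (hy : y ∈ V) (v w : Fin n → ℝ) :
    fderiv ℝ (fun t => fderiv ℝ u t w) y v = fderiv ℝ (fderiv ℝ u) y v w := by
  have h := (ContinuousLinearMap.apply ℝ (Fin n → ℝ) w).hasFDerivAt.comp y
    (fderiv_hasFDerivAt hVo hu hy)
  have h' : HasFDerivAt (fun t => fderiv ℝ u t w) _ y := h
  rw [h'.fderiv]; simp

lemma exists_Gamma {V : Set (Fin n → ℝ)} (hVo : IsOpen V)
    {u : (Fin n → ℝ) → (Fin n → ℝ)} (hu : ContDiffOn ℝ (⊤ : ℕ∞) u V)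
    (hb : ∀ y ∈ V, Function.Bijective (fderiv ℝ u y)) :
    ∃ Γ : (Fin n → ℝ) → ((Fin n → ℝ) →L[ℝ] (Fin n → ℝ) →L[ℝ] (Fin n → ℝ)),
      ∀ y ∈ V, ∀ v w : Fin n → ℝ,
        fderiv ℝ u y (Γ y v w) = fderiv ℝ (fun t => fderiv ℝ u t w) y v := by
  refine ⟨fun y => (ContinuousLinearMap.compL ℝ _ _ _ (fderiv ℝ u y).inverse).comp
    (fderiv ℝ (fderiv ℝ u) y), fun y hy v w => ?_⟩
  rw [fderiv2_apply hVo hu hy]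
  simp [(isInvertible_of_bij (hb y hy)).self_apply_inverse]

lemma exists_ball {V : Set (Fin n → ℝ)} (hVo : IsOpen V)
    {u : (Fin n → ℝ) → (Fin n → ℝ)} (hu : ContDiffOn ℝ (⊤ : ℕ∞) u V)
    {x : Fin n → ℝ} (hx : x ∈ V) (hb : Function.Bijective (fderiv ℝ u x)) :
    ∃ W : Set (Fin n → ℝ), IsOpen W ∧ IsPreconnected W ∧ x ∈ W ∧ W ⊆ V ∧ Set.InjOn u W ∧
      IsOpen (u '' W) := by
  obtain ⟨e, he⟩ := isInvertible_of_bij hb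
  have hc := hu.contDiffAt (hVo.mem_nhds hx)
  have hd : HasFDerivAt u (e : (Fin n → ℝ) →L[ℝ] (Fin n → ℝ)) x := by
    rw [he]; exact (hc.differentiableAt (by simp)).hasFDerivAt
  let R := hc.toOpenPartialHomeomorph u hd (by simp)
  have hxR : x ∈ R.source := hc.mem_toOpenPartialHomeomorph_source hd (by simp)
  obtain ⟨r, hr, hsub⟩ := Metric.isOpen_iff.1 (hVo.inter R.open_source) x ⟨hx, hxR⟩
  have hs : Metric.ball x r ⊆ R.source := fun t ht => (hsub ht).2
  exact ⟨Metric.ball x r, Metric.isOpen_ball, (convex_ball x r).isPreconnected,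
    Metric.mem_ball_self hr, fun t ht => (hsub ht).1, R.injOn.mono hs,
    R.isOpen_image_of_subset_source Metric.isOpen_ball hs⟩

/-- The basis of coordinate covectors. -/
noncomputable def projBasis (n : ℕ) : Module.Basis (Fin n) ℝ ((Fin n → ℝ) →L[ℝ] ℝ) :=
  (Pi.basisFun ℝ (Fin n)).dualBasis.map LinearMap.toContinuousLinearMap

lemma projBasis_apply (i : Fin n) : projBasis n i = ContinuousLinearMap.proj i := by
  ext v
  simp [projBasis]

end Local

/-- Theorem 3.1: a smooth `p`-form `ω` (resp. `q`-vector field `V`)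
has constant coefficients near `x` iff there are an open neighbourhood `V₀ ∋ x`,
`V₀ ⊆ U`, and a smooth map `u : V₀ → ℝⁿ` with invertible differential such that,
with `Γ_y(v,w) = (Du_y)⁻¹(D²u_y(v,w))` (characterized by
`Du_y(Γ_y(v,w)) = D²u_y(v,w)`), the second-order PDE system
`(Dω_y(e_j))(z) = Σ_h ω_y(z₁,…,Γ_y(e_j,z_h),…,z_p)` (resp.
`(DV_y(e_j))(w) = −Σ_h V_y(w₁,…,w_h∘Γ_y(e_j,·),…,w_q)`) holds on `V₀` for all
basis vectors `z_i ∈ {e₁,…,eₙ}` (resp. basis covectors `w_i ∈ {ε¹,…,εⁿ}`). -/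
theorem constantCoefficients_iff_PDEsystem (n p q : ℕ)
    (U : Set (Fin n → ℝ)) (hU : IsOpen U)
    (ω : (Fin n → ℝ) → ((Fin n → ℝ) [×p]→L[ℝ] ℝ))
    (hω : ContDiffOn ℝ (⊤ : ℕ∞) ω U)
    (haltω : ∀ y ∈ U, ∀ v : Fin p → (Fin n → ℝ), ∀ i j, i ≠ j → v i = v j →
      ω y v = 0)
    (V : (Fin n → ℝ) → (((Fin n → ℝ) →L[ℝ] ℝ) [×q]→L[ℝ] ℝ))
    (hV : ContDiffOn ℝ (⊤ : ℕ∞) V U)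
    (haltV : ∀ y ∈ U, ∀ w : Fin q → ((Fin n → ℝ) →L[ℝ] ℝ), ∀ i j, i ≠ j →
      w i = w j → V y w = 0)
    (x : Fin n → ℝ) (hx : x ∈ U) :
    (HasConstantCoefficientsFormAt n p U ω x ↔
      ∃ V₀ : Set (Fin n → ℝ), IsOpen V₀ ∧ x ∈ V₀ ∧ V₀ ⊆ U ∧
        ∃ u : (Fin n → ℝ) → (Fin n → ℝ),
          ContDiffOn ℝ (⊤ : ℕ∞) u V₀ ∧
          (∀ y ∈ V₀, Function.Bijective (fderiv ℝ u y)) ∧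
          ∃ Γ : (Fin n → ℝ) → ((Fin n → ℝ) →L[ℝ] (Fin n → ℝ) →L[ℝ] (Fin n → ℝ)),
            (∀ y ∈ V₀, ∀ v w : Fin n → ℝ,
              fderiv ℝ u y (Γ y v w) = fderiv ℝ (fun t => fderiv ℝ u t w) y v) ∧
            (∀ y ∈ V₀, ∀ j : Fin n, ∀ s : Fin p → Fin n,
              fderiv ℝ ω y (Pi.single j (1 : ℝ))
                  (fun i => Pi.single (s i) (1 : ℝ)) =
                ∑ h : Fin p, ω y (Function.update
                  (fun i => (Pi.single (s i) (1 : ℝ) : Fin n → ℝ)) h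
                  (Γ y (Pi.single j (1 : ℝ)) (Pi.single (s h) (1 : ℝ))))))
    ∧
    (HasConstantCoefficientsVecAt n q U V x ↔
      ∃ V₀ : Set (Fin n → ℝ), IsOpen V₀ ∧ x ∈ V₀ ∧ V₀ ⊆ U ∧
        ∃ u : (Fin n → ℝ) → (Fin n → ℝ),
          ContDiffOn ℝ (⊤ : ℕ∞) u V₀ ∧
          (∀ y ∈ V₀, Function.Bijective (fderiv ℝ u y)) ∧
          ∃ Γ : (Fin n → ℝ) → ((Fin n → ℝ) →L[ℝ] (Fin n → ℝ) →L[ℝ] (Fin n → ℝ)),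
            (∀ y ∈ V₀, ∀ v w : Fin n → ℝ,
              fderiv ℝ u y (Γ y v w) = fderiv ℝ (fun t => fderiv ℝ u t w) y v) ∧
            (∀ y ∈ V₀, ∀ j : Fin n, ∀ s : Fin q → Fin n,
              fderiv ℝ V y (Pi.single j (1 : ℝ))
                  (fun i => ContinuousLinearMap.proj (s i)) =
                - ∑ h : Fin q, V y (Function.update
                  (fun i => (ContinuousLinearMap.proj (s i) :
                    (Fin n → ℝ) →L[ℝ] ℝ)) h
                  ((ContinuousLinearMap.proj (s h) : (Fin n → ℝ) →L[ℝ] ℝ).comp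
                    (Γ y (Pi.single j (1 : ℝ))))))) := by
  constructor
  · constructor
    · rintro ⟨W, hWo, hxW, hWU, u, hu, -, -, hb, c, hc⟩
      obtain ⟨Γ, hΓ⟩ := exists_Gamma hWo hu hb
      refine ⟨W, hWo, hxW, hWU, u, hu, hb, Γ, hΓ, fun y hy j s => ?_⟩
      have hinv : ∀ t ∈ W, (fderiv ℝ u t).IsInvertible :=
        fun t ht => isInvertible_of_bij (hb t ht)
      obtain ⟨B', hB, hS⟩ := inverse_hasFDerivAt hWo hy (fderiv_hasFDerivAt hWo hu hy) hinv
        (Γ := Γ y) (fun v w => by rw [hΓ y hy, fderiv2_apply hWo hu hy])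
      have hf : HasFDerivAt ω (fderiv ℝ ω y) y :=
        ((hω.contDiffAt (hU.mem_nhds (hWU hy))).differentiableAt (by simp)).hasFDerivAt
      have h := covD_of_const hf hB hS (hinv y hy).inverse.surjective hWo hy (fun w => c w)
        (fun t ht w => by
          rw [hc t ht]
          simp only [(hinv t ht).self_apply_inverse])
        (fun i => Pi.single (s i) (1 : ℝ))
      have h1 := congrArg (fun L => L (Pi.single j (1 : ℝ))) h
      simp only [covD_apply, neg_apply, zero_apply,
        cmm_map_update_neg, Finset.sum_neg_distrib] at h1
      linarith
    · rintro ⟨V₀, hVo, hxV, hVU, u, hu, hb, Γ, hΓ, hpde⟩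
      obtain ⟨W, hWo, hWc, hxW, hWV, hinj, himg⟩ := exists_ball hVo hu hxV (hb x hxV)
      have hinv : ∀ t ∈ V₀, (fderiv ℝ u t).IsInvertible :=
        fun t ht => isInvertible_of_bij (hb t ht)
      have hB := fun y (hy : y ∈ V₀) =>
        inverse_hasFDerivAt hVo hy (fderiv_hasFDerivAt hVo hu hy) hinv
        (Γ := Γ y) (fun v w => by rw [hΓ y hy, fderiv2_apply hVo hu hy])
      choose! B' hB hS using hB
      have hf : ∀ y ∈ V₀, HasFDerivAt ω (fderiv ℝ ω y) y := fun y hy =>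
        ((hω.contDiffAt (hU.mem_nhds (hVU hy))).differentiableAt (by simp)).hasFDerivAt
      refine ⟨W, hWo, hxW, hWV.trans hVU, u, hu.mono hWV, hinj, himg,
        fun y hy => hb y (hWV hy),
        (ω x).compContinuousLinearMap (fun _ => (fderiv ℝ u x).inverse), fun y hy v => ?_⟩
      have h := const_of_covD (S := fun y => -Γ y) hWo hWc (fun y hy => hf y (hWV hy))
        (fun y hy => hB y (hWV hy)) (fun y hy => hS y (hWV hy))
        (fun y hy z => covD_eq_zero (Pi.basisFun ℝ (Fin n)) (Pi.basisFun ℝ (Fin n))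
          (fun j s => by
            simp only [covD_apply, Pi.basisFun_apply, hpde y (hWV hy),
              neg_apply,
              cmm_map_update_neg, Finset.sum_neg_distrib]
            exact add_neg_cancel _) z)
        hxW hy (fun i => fderiv ℝ u y (v i))
      simp only [(hinv y (hWV hy)).inverse_apply_self] at h
      rw [h]; rfl
  · have hder : ∀ (W : Set (Fin n → ℝ)), IsOpen W → ∀ u : (Fin n → ℝ) → (Fin n → ℝ),
        ContDiffOn ℝ (⊤ : ℕ∞) u W →
        ∀ Γ : (Fin n → ℝ) → ((Fin n → ℝ) →L[ℝ] (Fin n → ℝ) →L[ℝ] (Fin n → ℝ)),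
        (∀ y ∈ W, ∀ v w : Fin n → ℝ,
              fderiv ℝ u y (Γ y v w) = fderiv ℝ (fun t => fderiv ℝ u t w) y v) →
        ∀ y ∈ W, HasFDerivAt (fun t => precompL (fderiv ℝ u t))
            (precompL.comp (fderiv ℝ (fderiv ℝ u) y)) y ∧
          ∀ e w, (precompL.comp (fderiv ℝ (fderiv ℝ u) y)) e w =
            (precompL.comp (Γ y)) e (precompL (fderiv ℝ u y) w) := by
      intro W hWo u hu Γ hΓ y hy
      refine ⟨precompL_hasFDerivAt (fderiv_hasFDerivAt hWo hu hy), fun e w => ?_⟩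
      ext v
      simp [precompL_apply, hΓ y hy, fderiv2_apply hWo hu hy]
    constructor
    · rintro ⟨W, hWo, hxW, hWU, u, hu, -, -, hb, c, hc⟩
      obtain ⟨Γ, hΓ⟩ := exists_Gamma hWo hu hb
      refine ⟨W, hWo, hxW, hWU, u, hu, hb, Γ, hΓ, fun y hy j s => ?_⟩
      obtain ⟨hB, hS⟩ := hder W hWo u hu Γ hΓ y hy
      have hf : HasFDerivAt V (fderiv ℝ V y) y :=
        ((hV.contDiffAt (hU.mem_nhds (hWU hy))).differentiableAt (by simp)).hasFDerivAt
      have hinv := isInvertible_of_bij (hb y hy)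
      have h := covD_of_const hf hB hS
        (fun z => ⟨z.comp (fderiv ℝ u y).inverse, by
          ext v; simp [precompL_apply, hinv.inverse_apply_self]⟩) hWo hy (fun w => c w)
        (fun t ht w => (hc t ht w).symm)
        (fun i => ContinuousLinearMap.proj (s i))
      have h1 := congrArg (fun L => L (Pi.single j (1 : ℝ))) h
      simp only [covD_apply, zero_apply] at h1
      exact eq_neg_of_add_eq_zero_left h1
    · rintro ⟨V₀, hVo, hxV, hVU, u, hu, hb, Γ, hΓ, hpde⟩
      obtain ⟨W, hWo, hWc, hxW, hWV, hinj, himg⟩ := exists_ball hVo hu hxV (hb x hxV)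
      have hf : ∀ y ∈ V₀, HasFDerivAt V (fderiv ℝ V y) y := fun y hy =>
        ((hV.contDiffAt (hU.mem_nhds (hVU hy))).differentiableAt (by simp)).hasFDerivAt
      have hd := hder V₀ hVo u hu Γ hΓ
      refine ⟨W, hWo, hxW, hWV.trans hVU, u, hu.mono hWV, hinj, himg,
        fun y hy => hb y (hWV hy),
        (V x).compContinuousLinearMap (fun _ => precompL (fderiv ℝ u x)), fun y hy w => ?_⟩
      have h := const_of_covD (S := fun y => precompL.comp (Γ y)) hWo hWc
        (fun y hy => hf y (hWV hy))
        (fun y hy => (hd y (hWV hy)).1) (fun y hy => (hd y (hWV hy)).2)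
        (fun y hy z => covD_eq_zero (Pi.basisFun ℝ (Fin n)) (projBasis n)
          (fun j s => by
            simp only [covD_apply, Pi.basisFun_apply, projBasis_apply, hpde y (hWV hy)]
            exact neg_add_cancel _) z)
        hxW hy w
      exact h.symm
end
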